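/- For each prime p, the set of maximal ideals of the ring of algebraic integers Z̄ containing p, topologized as a subspace of 2^Z̄ with the product topology, is homeomorphic to the Cantor space 2^ℕ. -/

import Mathlib

/-- The ring of algebraic integers: the integral closure of ℤ in an algebraic closure of ℚ. -/
def Zbar : Type := integralClosure ℤ (AlgebraicClosure ℚ)

noncomputable instance : CommRing Zbar :=
  inferInstanceAs (CommRing (integralClosure ℤ (AlgebraicClosure ℚ)))

/-!
By Brouwer's characterization of the Cantor space, the point is that the space is compact and
perfect. It is closed in the cube because primality is a conjunction of conditions on finitely many
coordinates each, and nonzero primes are maximal.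

For perfectness, let `M` be a maximal ideal and `F` a finite set of algebraic integers generating
the number field `K`; we move `M` by an automorphism over `K`. Choose an integer `n ≠ 0` in `M`, an
algebraic integer `c` of `K` such that `d = 1 + 4 * n * c` is not a square in `K`, and let `σ` fix
`K` and send `√d` to `-√d`. Then `α = (1 + √d) / 2` is integral, `σ α = 1 - α`, and
`α * (1 - α) = -n * c` lies in `M`. Exactly one of `α` and `1 - α` therefore lies in `M`, so
`σ⁻¹ M ≠ M`, while the two ideals contain the same elements of `F`.
-/

open Set Topology IntermediateField Polynomial

section Topology

variable {X : Type*} [TopologicalSpace X]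

/-- A tree of nonempty clopen cells indexed by finite binary words, with the whole space at the
root, in which the two children of every cell partition it. As in `PiNat.res`, the most recent
digit is the head of the word. -/
structure IsClopenPartitionScheme (A : List Bool → Set X) : Prop where
  nil : A [] = univ
  iUnion_cons : ∀ l, ⋃ b, A (b :: l) = A l
  disjoint : CantorScheme.Disjoint A
  isClopen : ∀ l, IsClopen (A l)
  nonempty : ∀ l, (A l).Nonempty

namespace IsClopenPartitionScheme

variable {A : List Bool → Set X}

theorem antitone (hA : IsClopenPartitionScheme A) : CantorScheme.Antitone A := fun l b =>
  (subset_iUnion (fun b => A (b :: l)) b).trans (hA.iUnion_cons l).subset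

theorem res_eq_res_of_mem (hA : IsClopenPartitionScheme A) {x : X} {b c : ℕ → Bool} {n : ℕ}
    (hb : x ∈ A (PiNat.res b n)) (hc : x ∈ A (PiNat.res c n)) :
    PiNat.res b n = PiNat.res c n := by
  induction n with
  | zero => rfl
  | succ n ih =>
    have hres : PiNat.res b n = PiNat.res c n :=
      ih (hA.antitone _ _ hb) (hA.antitone _ _ hc)
    rw [PiNat.res_succ] at hb hc ⊢
    rw [PiNat.res_succ, hres]
    rw [hres] at hb
    by_contra hne
    have hdigit : b n ≠ c n := fun h => hne (by rw [h])
    exact (hA.disjoint _ hdigit).le_bot ⟨hb, hc⟩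

theorem exists_branch (hA : IsClopenPartitionScheme A) (x : X) :
    ∃ b : ℕ → Bool, ∀ n, x ∈ A (PiNat.res b n) := by
  have exists_child (l : {l // x ∈ A l}) : ∃ b, x ∈ A (b :: l.1) :=
    mem_iUnion.mp ((hA.iUnion_cons l).symm ▸ l.2)
  choose digit mem_child using exists_child
  let path : ℕ → {l // x ∈ A l} :=
    Nat.rec ⟨[], hA.nil ▸ mem_univ x⟩ fun _ l => ⟨digit l :: l, mem_child l⟩
  have res_eq (n : ℕ) : PiNat.res (fun n => digit (path n)) n = (path n).1 := by
    induction n with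
    | zero => rfl
    | succ n ih => rw [PiNat.res_succ, ih]
  exact ⟨fun n => digit (path n), fun n => res_eq n ▸ (path n).2⟩

theorem exists_mem_branch [CompactSpace X] (hA : IsClopenPartitionScheme A) (b : ℕ → Bool) :
    ∃ x, ∀ n, x ∈ A (PiNat.res b n) := by
  simpa only [Set.Nonempty, mem_iInter] using
    IsCompact.nonempty_iInter_of_sequence_nonempty_isCompact_isClosed
      (fun n => A (PiNat.res b n)) (fun n => hA.antitone _ _) (fun n => hA.nonempty _)
      (hA.isClopen _).isClosed.isCompact (fun n => (hA.isClopen _).isClosed)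

theorem nonempty_homeomorph [CompactSpace X] (hA : IsClopenPartitionScheme A)
    (hsep : ∀ b : ℕ → Bool, (⋂ n, A (PiNat.res b n)).Subsingleton) :
    Nonempty (X ≃ₜ (ℕ → Bool)) := by
  choose branch mem_branch using hA.exists_branch
  have branch_apply_eq {x : X} {b : ℕ → Bool} {n : ℕ} (h : x ∈ A (PiNat.res b (n + 1))) :
      branch x n = b n :=
    PiNat.res_eq_res.mp (hA.res_eq_res_of_mem (mem_branch x (n + 1)) h) n.lt_succ_self
  have hcont : Continuous branch := by
    refine continuous_pi fun n => IsLocallyConstant.continuous <|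
      (IsLocallyConstant.iff_eventually_eq _).mpr fun x => ?_
    filter_upwards [(hA.isClopen _).isOpen.mem_nhds (mem_branch x (n + 1))] with y hy
    exact branch_apply_eq hy
  have hinj : Function.Injective branch := fun x y hxy =>
    hsep (branch x) (mem_iInter.mpr (mem_branch x)) (mem_iInter.mpr (hxy ▸ mem_branch y))
  have hsurj : Function.Surjective branch := fun b =>
    (hA.exists_mem_branch b).imp fun x hx => funext fun n => branch_apply_eq (hx (n + 1))
  exact ⟨(isHomeomorph_iff_continuous_bijective.mpr ⟨hcont, hinj, hsurj⟩).homeomorph⟩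

end IsClopenPartitionScheme

variable [TotallySeparatedSpace X] [PerfectSpace X]

theorem exists_isClopen_inter_nonempty_diff_nonempty {D : Set X} (hD : IsOpen D)
    (hne : D.Nonempty) : ∃ V, IsClopen V ∧ (D ∩ V).Nonempty ∧ (D \ V).Nonempty := by
  obtain ⟨x, hx⟩ := hne
  obtain ⟨y, ⟨hy, -⟩, hyx⟩ := preperfect_iff_nhds.mp PerfectSpace.univ_preperfect x (mem_univ x) D
    (hD.mem_nhds hx)
  obtain ⟨V, hV, hxV, hyV⟩ := exists_isClopen_of_totally_separated hyx.symm
  exact ⟨V, hV, ⟨x, hx, hxV⟩, ⟨y, hy, hyV⟩⟩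

theorem exists_isClopen_partition_refining {D U : Set X} (hD : IsClopen D) (hne : D.Nonempty)
    (hU : IsClopen U) :
    ∃ E : Bool → Set X, ⋃ b, E b = D ∧ Pairwise (Function.onFun Disjoint E) ∧
      ∀ b, IsClopen (E b) ∧ (E b).Nonempty ∧ (E b ⊆ U ∨ Disjoint (E b) U) := by
  obtain ⟨V, hV, hDV, hDV', hVU⟩ : ∃ V, IsClopen V ∧ (D ∩ V).Nonempty ∧ (D \ V).Nonempty ∧
      (V = U ∨ D ⊆ U ∨ Disjoint D U) := by
    by_cases hin : (D ∩ U).Nonempty ∧ (D \ U).Nonempty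
    · exact ⟨U, hU, hin.1, hin.2, .inl rfl⟩
    · obtain ⟨V, hV, hDV, hDV'⟩ := exists_isClopen_inter_nonempty_diff_nonempty hD.isOpen hne
      refine ⟨V, hV, hDV, hDV', .inr ?_⟩
      rw [← sdiff_eq_empty, disjoint_iff_inter_eq_empty, ← not_nonempty_iff_eq_empty,
        ← not_nonempty_iff_eq_empty]
      tauto
  refine ⟨fun b => cond b (D ∩ V) (D \ V), ?_, ?_, ?_⟩
  · rw [← union_eq_iUnion, inter_union_sdiff]
  · exact pairwise_disjoint_on_bool.mpr disjoint_inf_sdiff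
  · rw [Bool.forall_bool]
    refine ⟨⟨hD.diff hV, hDV', ?_⟩, hD.inter hV, hDV, ?_⟩
    · obtain rfl | h | h := hVU
      · exact .inr disjoint_sdiff_left
      · exact .inl (sdiff_subset.trans h)
      · exact .inr (h.mono_left sdiff_subset)
    · obtain rfl | h | h := hVU
      · exact .inl inter_subset_right
      · exact .inl (inter_subset_left.trans h)
      · exact .inr (h.mono_left inter_subset_left)

theorem exists_isClopenPartitionScheme [Nonempty X] {U : ℕ → Set X} (hU : ∀ n, IsClopen (U n)) :
    ∃ A : List Bool → Set X, IsClopenPartitionScheme A ∧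
      ∀ b l, A (b :: l) ⊆ U l.length ∨ Disjoint (A (b :: l)) (U l.length) := by
  choose! E hE using fun (D : Set X) (n : ℕ) (hD : IsClopen D ∧ D.Nonempty) =>
    exists_isClopen_partition_refining hD.1 hD.2 (hU n)
  let A : List Bool → Set X := List.rec univ fun b l D => E D l.length b
  have hA (l : List Bool) : IsClopen (A l) ∧ (A l).Nonempty := by
    induction l with
    | nil => exact ⟨isClopen_univ, univ_nonempty⟩
    | cons b l ih => exact ⟨((hE _ _ ih).2.2 b).1, ((hE _ _ ih).2.2 b).2.1⟩
  exact ⟨A, ⟨rfl, fun l => (hE _ _ (hA l)).1, fun l => (hE _ _ (hA l)).2.1,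
    fun l => (hA l).1, fun l => (hA l).2⟩, fun b l => ((hE _ _ (hA l)).2.2 b).2.2⟩

end Topology

theorem exists_seq_isClopen_separating (X : Type*) [TopologicalSpace X] [CompactSpace X]
    [T2Space X] [TotallyDisconnectedSpace X] [SecondCountableTopology X] :
    ∃ U : ℕ → Set X, (∀ n, IsClopen (U n)) ∧ ∀ x y, (∀ n, x ∈ U n ↔ y ∈ U n) → x = y := by
  obtain ⟨B, hBclopen, hBcount, hB⟩ := (isTopologicalBasis_isClopen (X := X)).exists_countable
  obtain ⟨U, hU⟩ := (hBcount.insert univ).exists_eq_range (insert_nonempty _ _)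
  have mem_range {V : Set X} (hV : V ∈ B) : V ∈ range U := hU ▸ mem_insert_of_mem _ hV
  refine ⟨U, fun n => ?_, fun x y hxy => ?_⟩
  · obtain h | h := hU.symm ▸ mem_range_self n
    · exact h ▸ isClopen_univ
    · exact hBclopen h
  · refine hB.inseparable_iff.mpr (fun V hV => ?_) |>.eq
    obtain ⟨n, rfl⟩ := mem_range hV
    exact hxy n

theorem nonempty_homeomorph_nat_bool (X : Type*) [TopologicalSpace X] [CompactSpace X] [T2Space X]
    [TotallyDisconnectedSpace X] [SecondCountableTopology X] [PerfectSpace X] [Nonempty X] :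
    Nonempty (X ≃ₜ (ℕ → Bool)) := by
  obtain ⟨U, hU, hsep⟩ := exists_seq_isClopen_separating X
  obtain ⟨A, hA, hAU⟩ := exists_isClopenPartitionScheme hU
  refine hA.nonempty_homeomorph fun b x hx y hy => hsep x y fun n => ?_
  rw [mem_iInter] at hx hy
  have hcell := hAU (b n) (PiNat.res b n)
  rw [PiNat.res_length, ← PiNat.res_succ] at hcell
  obtain hsub | hdisj := hcell
  · exact iff_of_true (hsub (hx _)) (hsub (hy _))
  · exact iff_of_false (hdisj.notMem_of_mem_left (hx _)) (hdisj.notMem_of_mem_left (hy _))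

theorem perfectSpace_of_forall_finset_exists_ne {ι : Type*} {Y : ι → Type*}
    [∀ i, TopologicalSpace (Y i)] {S : Set (∀ i, Y i)}
    (hS : ∀ f ∈ S, ∀ F : Finset ι, ∃ g ∈ S, (∀ i ∈ F, g i = f i) ∧ g ≠ f) : PerfectSpace S := by
  refine ⟨preperfect_iff_nhds.mpr fun f _ W hW => ?_⟩
  obtain ⟨V, hV, hVW⟩ := mem_nhds_induced Subtype.val f W |>.mp hW
  obtain ⟨V', hV'V, hV', hfV'⟩ := mem_nhds_iff.mp hV
  obtain ⟨F, u, hu, hFV⟩ := isOpen_pi_iff.mp hV' f.1 hfV'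
  obtain ⟨g, hgS, hgF, hgf⟩ := hS f f.2 F
  have hgV : g ∈ V' := hFV fun i hi => hgF i hi ▸ (hu i hi).2
  exact ⟨⟨g, hgS⟩, ⟨hVW (hV'V hgV), mem_univ _⟩, fun h => hgf (congrArg Subtype.val h)⟩

section Ideals

variable {R : Type*} [CommRing R]

/-- The space of maximal ideals containing `a`, each encoded by its indicator function so that the
space is topologized as a subspace of the cube `R → Bool`. -/
def maximalIdealIndicators (a : R) : Set (R → Bool) :=
  {f | ∃ M : Ideal R, M.IsMaximal ∧ a ∈ M ∧ ∀ b : R, f b = true ↔ b ∈ M}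

theorem exists_isPrime_forall_iff_mem {f : R → Bool} :
    (∃ P : Ideal R, P.IsPrime ∧ ∀ b, f b = true ↔ b ∈ P) ↔
      f 0 = true ∧ f 1 = false ∧ (∀ a b, f a = true → f b = true → f (a + b) = true) ∧
        ∀ a b, f (a * b) = (f a || f b) := by
  constructor
  · rintro ⟨P, hP, hf⟩
    simp only [← Bool.not_eq_true, Bool.eq_iff_iff (b := _ || _), Bool.or_eq_true, hf]
    exact ⟨P.zero_mem, hP.one_notMem, fun _ _ => P.add_mem, fun _ _ => hP.mul_mem_iff_mem_or_mem⟩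
  · rintro ⟨h_zero, h_one, h_add, h_mul⟩
    let P : Ideal R :=
      { carrier := {a | f a = true}
        add_mem' := h_add _ _
        zero_mem' := h_zero
        smul_mem' := fun a b (hb : f b = true) => by simp [h_mul, hb] }
    have mem_P (b : R) : f b = true ↔ b ∈ P := Iff.rfl
    refine ⟨P, ⟨P.ne_top_iff_one.mpr ?_, fun {a b} h => ?_⟩, mem_P⟩
    · simp [← mem_P, h_one]
    · simpa only [← mem_P, h_mul, Bool.or_eq_true] using h

theorem isClosed_setOf_exists_isPrime_forall_iff_mem :
    IsClosed {f : R → Bool | ∃ P : Ideal R, P.IsPrime ∧ ∀ b, f b = true ↔ b ∈ P} := by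
  have isClopen_eval (a : R) : IsClopen {f : R → Bool | f a = true} :=
    (isClopen_discrete {true}).preimage (continuous_apply a)
  simp only [exists_isPrime_forall_iff_mem, ofPred_and, ofPred_forall]
  refine (isClopen_eval 0).isClosed.inter (.inter ?_ (.inter ?_ ?_))
  · exact isClosed_eq (continuous_apply 1) continuous_const
  · exact isClosed_iInter fun a => isClosed_iInter fun b =>
      isClosed_imp (isClopen_eval a).isOpen
        (isClosed_imp (isClopen_eval b).isOpen (isClopen_eval _).isClosed)
  · have continuous_or (a b : R) : Continuous fun f : R → Bool => f a || f b :=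
      (continuous_of_discreteTopology (f := fun x : Bool × Bool => x.1 || x.2)).comp₂
        (continuous_apply a) (continuous_apply b)
    exact isClosed_iInter fun a => isClosed_iInter fun b =>
      isClosed_eq (continuous_apply _) (continuous_or a b)

theorem isClosed_maximalIdealIndicators [Ring.DimensionLEOne R] {a : R} (ha : a ≠ 0) :
    IsClosed (maximalIdealIndicators a) := by
  have maximal_iff (P : Ideal R) (haP : a ∈ P) : P.IsMaximal ↔ P.IsPrime :=
    ⟨fun h => h.isPrime, fun h => h.isMaximal (P.ne_bot_iff.mpr ⟨a, haP, ha⟩)⟩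
  have hinter : maximalIdealIndicators a =
      {f | ∃ P : Ideal R, P.IsPrime ∧ ∀ b, f b = true ↔ b ∈ P} ∩ {f | f a = true} := by
    ext f
    simp only [maximalIdealIndicators, mem_ofPred_eq, mem_inter_iff]
    grind
  rw [hinter]
  exact isClosed_setOf_exists_isPrime_forall_iff_mem.inter
    (isClosed_eq (continuous_apply a) continuous_const)

theorem comap_ne_of_map_eq_one_sub {M : Ideal R} (hM : M.IsPrime) {τ : R →+* R} {α : R}
    (hτ : τ α = 1 - α) (hα : α * (1 - α) ∈ M) : M.comap τ ≠ M := by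
  intro h
  have hiff : 1 - α ∈ M ↔ α ∈ M := by rw [← hτ, ← Ideal.mem_comap, h]
  have hboth : α ∈ M ∧ 1 - α ∈ M := by
    have := hM.mem_or_mem hα
    tauto
  exact hM.one_notMem (by simpa using M.add_mem hboth.1 hboth.2)

end Ideals

theorem exists_not_isSquare_one_add_mul {B : Type*} [CommRing B] [IsDedekindDomain B] {m : B}
    (h0 : 1 + m ≠ 0) (hu : ¬IsUnit (1 + m)) : ∃ c, ¬IsSquare (1 + m * c) := by
  obtain ⟨Q, hQ, hmQ⟩ := exists_max_ideal_of_mem_nonunits hu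
  obtain ⟨x, hxQ, hxQ'⟩ := Q.exists_mem_pow_notMem_pow_succ
    (Q.ne_bot_iff.mpr ⟨_, hmQ, h0⟩) hQ.ne_top 1
  rw [pow_one] at hxQ
  -- Since `m ≡ -1` modulo `1 + m`, this choice makes `1 + m * c ≡ x` modulo `(1 + m) ^ 2`.
  refine ⟨(m + 2) * (1 - x), fun ⟨s, hs⟩ => hxQ' ?_⟩
  have hx : x = s ^ 2 - (1 + m) ^ 2 * (1 - x) := by linear_combination hs
  have hsQ : s ∈ Q := hQ.isPrime.mem_of_pow_mem 2 <| by
    have : s ^ 2 = x + (1 + m) * ((1 + m) * (1 - x)) := by linear_combination -hs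
    exact this ▸ Q.add_mem hxQ (Q.mul_mem_right _ hmQ)
  rw [hx]
  exact Ideal.sub_mem _ (Ideal.pow_mem_pow hsQ 2)
    (Ideal.mul_mem_right _ _ (Ideal.pow_mem_pow hmQ 2))

theorem exists_mem_fixingSubgroup_map_eq_neg {k L : Type*} [Field k] [Field L] [Algebra k L]
    [IsGalois k L] {K : IntermediateField k L} {s : L} (hs : s ∉ K) (hs2 : s ^ 2 ∈ K) :
    ∃ σ ∈ K.fixingSubgroup, σ s = -s := by
  rw [← InfiniteGalois.fixedField_fixingSubgroup K, mem_fixedField_iff] at hs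
  push Not at hs
  obtain ⟨σ, hσ, hσs⟩ := hs
  have hsq : σ s ^ 2 = s ^ 2 := by
    rw [← map_pow, (mem_fixingSubgroup_iff K σ).mp hσ _ hs2]
  exact ⟨σ, hσ, (sq_eq_sq_iff_eq_or_eq_neg.mp hsq).resolve_left hσs⟩

theorem isIntegral_of_mul_one_sub {A S : Type*} [CommRing A] [CommRing S] [Algebra A S] {x : S}
    (hx : IsIntegral A (x * (1 - x))) : IsIntegral A x := by
  nontriviality A
  refine .of_aeval_monic (p := X ^ 2 - X) (by monicity!) ?_ ?_
  · exact (natDegree_eq_of_degree_eq_some (by compute_degree!)).trans_ne two_ne_zero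
  · simpa [mul_sub, sq] using hx.neg

theorem exists_mem_not_isUnit_one_add_four_mul {A : Type*} [CommRing A] [IsDomain A]
    (h2 : (2 : A) ≠ 0) (hA : (⊥ : Ideal A).jacobson = ⊥) {I : Ideal A} (hI : I ≠ ⊥) :
    ∃ n ∈ I, ¬IsUnit (1 + 4 * n) := by
  obtain ⟨m, hmI, hm0⟩ := I.ne_bot_iff.mp hI
  have h4m : 4 * m ∉ (⊥ : Ideal A).jacobson := by
    rw [hA, Ideal.mem_bot, show (4 : A) * m = 2 * (2 * m) by ring]
    exact mul_ne_zero h2 (mul_ne_zero h2 hm0)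
  rw [Ideal.mem_jacobson_bot, not_forall] at h4m
  obtain ⟨y, hy⟩ := h4m
  exact ⟨m * y, I.mul_mem_right y hmI, by rwa [← mul_assoc, add_comm]⟩

section IntegralClosure

variable {A k L : Type*} [CommRing A] [IsDedekindDomain A] [Field k] [Algebra A k]
  [IsFractionRing A k] [Field L] [Algebra k L] [Algebra A L] [IsScalarTower A k L]

theorem exists_isIntegral_forall_sq_eq_notMem [IsGalois k L] {n : A} (h0 : 1 + 4 * n ≠ 0)
    (hu : ¬IsUnit (1 + 4 * n)) (K : IntermediateField k L) [FiniteDimensional k K] :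
    ∃ c ∈ K, IsIntegral A c ∧ ∀ s : L, s ^ 2 = 1 + 4 * algebraMap A L n * c → s ∉ K := by
  have : IsScalarTower A K L := .of_algebraMap_eq fun _ => rfl
  have : FaithfulSMul A K := .trans A k K
  let B := integralClosure A K
  have : IsDedekindDomain B := integralClosure.isDedekindDomain A k K
  have map_eq : algebraMap A B (1 + 4 * n) = 1 + 4 * algebraMap A B n := by
    simp only [map_add, map_mul, map_one, map_ofNat]
  obtain ⟨c, hc⟩ := exists_not_isSquare_one_add_mul (B := B) (m := 4 * algebraMap A B n)
    (by rwa [← map_eq, map_ne_zero_iff _ (FaithfulSMul.algebraMap_injective A B)])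
    (by rwa [← map_eq, isUnit_map_iff])
  refine ⟨c, (c : K).2, c.2.algebraMap, fun s hs hsK => hc ?_⟩
  have hsK2 : (⟨s, hsK⟩ : K) ^ 2 = ((1 + 4 * algebraMap A B n * c : B) : K) := Subtype.ext hs
  have hsint : IsIntegral A (⟨s, hsK⟩ : K) := .of_pow two_pos (hsK2 ▸ Subtype.prop _)
  exact ⟨⟨⟨s, hsK⟩, hsint⟩, Subtype.ext (hsK2.symm.trans (sq _))⟩

theorem exists_algEquiv_fixing_map_eq_one_sub [IsGalois k L] (hL : ∀ x : L, IsSquare x) {n : A}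
    (h0 : 1 + 4 * n ≠ 0) (hu : ¬IsUnit (1 + 4 * n)) {F : Set L} (hF : F.Finite) :
    ∃ (σ : L ≃ₐ[k] L) (α c : L), (∀ x ∈ F, σ x = x) ∧ σ α = 1 - α ∧ IsIntegral A α ∧
      IsIntegral A c ∧ α * (1 - α) = algebraMap A L n * c := by
  let K := adjoin k F
  have : FiniteDimensional k K := by
    have := hF.to_subtype
    exact finiteDimensional_adjoin fun x _ => Algebra.IsIntegral.isIntegral x
  obtain ⟨c, hcK, hc, hsqrt⟩ := exists_isIntegral_forall_sq_eq_notMem h0 hu K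
  obtain ⟨s, hs⟩ := hL (1 + 4 * algebraMap A L n * c)
  rw [← sq] at hs
  have hs2 : s ^ 2 ∈ K := by
    rw [← hs, IsScalarTower.algebraMap_apply A k L]
    exact add_mem (one_mem K) (mul_mem (mul_mem (ofNat_mem K 4) (K.algebraMap_mem _)) hcK)
  obtain ⟨σ, hσ, hσs⟩ := exists_mem_fixingSubgroup_map_eq_neg (hsqrt s hs.symm) hs2
  have h2 : (2 : L) ≠ 0 := by
    intro h
    have h4 : algebraMap A L (1 + 4 * n) = algebraMap A L 1 := by
      simp only [map_add, map_mul, map_one, map_ofNat]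
      linear_combination 2 * algebraMap A L n * h
    have : FaithfulSMul A L := .trans A k L
    exact hu ((FaithfulSMul.algebraMap_injective A L h4).symm ▸ isUnit_one)
  have hmul : (1 + s) / 2 * (1 - (1 + s) / 2) = algebraMap A L n * -c := by
    field_simp
    linear_combination hs
  refine ⟨σ, (1 + s) / 2, -c, fun x hx => ?_, ?_, ?_, hc.neg, hmul⟩
  · exact (mem_fixingSubgroup_iff K σ).mp hσ _ (subset_adjoin _ _ hx)
  · simp only [map_div₀, map_add, map_one, map_ofNat, hσs]
    field_simp
    ring
  · exact isIntegral_of_mul_one_sub (hmul ▸ isIntegral_algebraMap.mul hc.neg)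

variable {R : Type*} [CommRing R] [Algebra A R] [Algebra R L] [IsScalarTower A R L]
  [IsIntegralClosure R A L]

variable (k)

theorem exists_isMaximal_ne_forall_mem_iff [IsGalois k L] (h2 : (2 : A) ≠ 0)
    (hA : (⊥ : Ideal A).jacobson = ⊥) (hL : ∀ x : L, IsSquare x) {M : Ideal R}
    (hM : M.IsMaximal) (hM0 : M ≠ ⊥) {F : Set R} (hF : F.Finite) :
    ∃ N : Ideal R, N.IsMaximal ∧ N ≠ M ∧ ∀ b ∈ F, b ∈ N ↔ b ∈ M := by
  have R_injective := IsIntegralClosure.algebraMap_injective R A L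
  have : IsDomain R := R_injective.isDomain
  have : Algebra.IsIntegral A R := IsIntegralClosure.isIntegral_algebra A L
  obtain ⟨n, hnM, hn⟩ := exists_mem_not_isUnit_one_add_four_mul h2 hA (M.under_ne_bot A hM0)
  have hn0 : 1 + 4 * n ≠ 0 := fun h => (M.under A).ne_top_iff_one.mp (hM.under A).ne_top <| by
    rw [eq_neg_of_add_eq_zero_left h]
    exact neg_mem (Ideal.mul_mem_left _ 4 hnM)
  obtain ⟨σ, α, c, hσF, hσα, hα, hc, hmul⟩ := exists_algEquiv_fixing_map_eq_one_sub
    (k := k) hL hn0 hn (hF.image (algebraMap R L))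
  let τ : R ≃ₐ[A] R := galRestrict A k L R σ
  obtain ⟨β, rfl⟩ := IsIntegralClosure.isIntegral_iff (A := R) |>.mp hα
  obtain ⟨d, rfl⟩ := IsIntegralClosure.isIntegral_iff (A := R) |>.mp hc
  have hτF (x : R) (hx : x ∈ F) : τ x = x := R_injective <| by
    rw [algebraMap_galRestrict_apply, hσF _ (mem_image_of_mem _ hx)]
  have hτβ : τ β = 1 - β := R_injective <| by
    rw [algebraMap_galRestrict_apply, hσα, map_sub, map_one]
  have hβ : β * (1 - β) = algebraMap A R n * d := R_injective <| by
    rw [map_mul, map_sub, map_one, hmul, map_mul, ← IsScalarTower.algebraMap_apply A R L]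
  refine ⟨M.comap τ, Ideal.comap_isMaximal_of_equiv τ, ?_, fun b hb => ?_⟩
  · exact comap_ne_of_map_eq_one_sub (τ := τ) hM.isPrime hτβ (hβ ▸ M.mul_mem_right d hnM)
  · rw [Ideal.mem_comap, hτF b hb]

theorem perfectSpace_maximalIdealIndicators [IsGalois k L] (h2 : (2 : A) ≠ 0)
    (hA : (⊥ : Ideal A).jacobson = ⊥) (hL : ∀ x : L, IsSquare x) {a : R} (ha : a ≠ 0) :
    PerfectSpace (maximalIdealIndicators a) := by
  classical
  refine perfectSpace_of_forall_finset_exists_ne fun f ⟨M, hM, haM, hf⟩ F => ?_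
  obtain ⟨N, hN, hNM, hiff⟩ := exists_isMaximal_ne_forall_mem_iff k h2 hA hL hM
    (M.ne_bot_iff.mpr ⟨a, haM, ha⟩) (F.finite_toSet.insert a)
  refine ⟨fun b => decide (b ∈ N), ⟨N, hN, (hiff a (mem_insert _ _)).mpr haM, fun b => ?_⟩, ?_, ?_⟩
  · exact decide_eq_true_iff
  · intro b hb
    rw [Bool.eq_iff_iff, decide_eq_true_iff, hf, hiff b (mem_insert_of_mem _ hb)]
  · rintro rfl
    exact hNM (Ideal.ext fun b => by rw [← hf, decide_eq_true_iff])

theorem maximalIdeals_homeomorph_cantor_general [IsGalois k L] [Countable A] (h2 : (2 : A) ≠ 0)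
    (hA : (⊥ : Ideal A).jacobson = ⊥) (hL : ∀ x : L, IsSquare x) {a : R} (ha : a ≠ 0)
    (hu : ¬IsUnit a) :
    Nonempty (({f : R → Bool | ∃ M : Ideal R, M.IsMaximal ∧ a ∈ M ∧ ∀ b : R, f b = true ↔ b ∈ M} :
      Set (R → Bool)) ≃ₜ (ℕ → Bool)) := by
  change Nonempty (maximalIdealIndicators a ≃ₜ (ℕ → Bool))
  have : IsDomain R := (IsIntegralClosure.algebraMap_injective R A L).isDomain
  have : Algebra.IsIntegral A R := IsIntegralClosure.isIntegral_algebra A L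
  have : Ring.DimensionLEOne R := .of_isIntegral A R
  have : Countable R := by
    have : FaithfulSMul A L := .trans A k L
    have : FaithfulSMul A R := .tower_bot A R L
    rw [← countable_univ_iff]
    simpa only [Algebra.IsAlgebraic.isAlgebraic, ofPred_true] using Algebraic.countable A R
  have : CompactSpace (maximalIdealIndicators a) :=
    isCompact_iff_compactSpace.mp (isClosed_maximalIdealIndicators ha).isCompact
  have : PerfectSpace (maximalIdealIndicators a) :=
    perfectSpace_maximalIdealIndicators k h2 hA hL ha
  have : Nonempty (maximalIdealIndicators a) := by
    classical
    obtain ⟨M, hM, haM⟩ := exists_max_ideal_of_mem_nonunits hu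
    exact ⟨⟨fun b => decide (b ∈ M), M, hM, haM, fun b => decide_eq_true_iff⟩⟩
  exact nonempty_homeomorph_nat_bool _

end IntegralClosure

theorem int_jacobson_bot : (⊥ : Ideal ℤ).jacobson = ⊥ := by
  refine (Submodule.eq_bot_iff _).mpr fun x hx => ?_
  have hunit : IsUnit (x * x + 1) := Ideal.mem_jacobson_bot.mp hx x
  rw [Int.isUnit_iff] at hunit
  obtain h | h := hunit
  · exact mul_self_eq_zero.mp (by lia)
  · nlinarith [mul_self_nonneg x]

/-- For each prime `p`, the space of maximal ideals of the ring of algebraic integers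
containing `p`, topologized as a subspace of the Cantor cube `Bool ^ Zbar` via characteristic
functions, is homeomorphic to the Cantor space `2 ^ ℕ`. -/
theorem maximalIdeals_homeomorph_cantor (p : ℕ) (hp : p.Prime) :
    Nonempty (({f : Zbar → Bool |
      ∃ M : Ideal Zbar, M.IsMaximal ∧ (p : Zbar) ∈ M ∧ ∀ a : Zbar, f a = true ↔ a ∈ M} :
        Set (Zbar → Bool)) ≃ₜ (ℕ → Bool)) := by
  have hL (x : AlgebraicClosure ℚ) : IsSquare x :=
    (IsAlgClosed.exists_pow_nat_eq x two_pos).imp fun y hy => by rw [← sq, hy]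
  have : IsAlgClosure ℚ (AlgebraicClosure ℚ) := ⟨inferInstance, AlgebraicClosure.isAlgebraic ℚ⟩
  have hp0 : (p : integralClosure ℤ (AlgebraicClosure ℚ)) ≠ 0 := Nat.cast_ne_zero.mpr hp.ne_zero
  have hpu : ¬IsUnit (p : integralClosure ℤ (AlgebraicClosure ℚ)) := by
    rw [← map_natCast (algebraMap ℤ _) p, isUnit_map_iff, Int.ofNat_isUnit, Nat.isUnit_iff]
    exact hp.ne_one
  exact maximalIdeals_homeomorph_cantor_general (R := integralClosure ℤ (AlgebraicClosure ℚ)) ℚ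
    two_ne_zero int_jacobson_bot hL hp0 hpu
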